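/- arXiv:1203.5135 — 4 statements merged into one kernel-verified Lean document; each statement's English description precedes it below -/
import Mathlib

section
/- Let (T, ξ_T, I_T) be an i'-overlapping tree for some i' ∈ {1,2,3,4}, let i ∈ {1,2,3,4} with i ≠ i', and let ω_T be the dyadic interval of length |I_T|^{-1} containing ξ_T, p_T = I_T × ω_T. Set ν = 0 if {i, i'} = {1,2} or {i, i'} = {3,4}, and ν = 1 otherwise. Then for every integer k and all real coefficients (c_P)_{P∈T} one has the pointwise identity ∑_{P ∈ T : |I_P| > 2^{k+ν}} c_P φ_{P_i} = sgn(φ_{p_T}) · A_k[ sgn(φ_{p_T}) ∑_{P ∈ T} c_P φ_{P_i} ]. -/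
/-!
Both sides are linear in the coefficients, so the identity is proved quartile by quartile.

Fix `P ∈ T`.  On `I_P ⊆ I_T` the Walsh function of the top tile is a constant sign times the
Walsh function of `P_{i'}`: restricting to a dyadic subinterval drops the low bits of the index
(`walshF_restrict`), and `ξ ∈ ω_{P_{i'}}` says exactly that `ω_T` becomes `ω_{P_{i'}}` after
this (`topFreq_div`).  The indices of `P_i` and `P_{i'}` differ only in their two lowest bits, so
in `sgn(φ_{p_T}) φ_{P_i}` all other bits cancel (`walshF_mul_sibling`).  What remains is a step
function on dyadic intervals of length `2^{-1-ν} |I_P|`, taking opposite values on the two halves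
of each dyadic interval of length `2^{-ν} |I_P|` (`packet_step`).

Such a function is reproduced by `A_k` when `2^k ≤ 2^{-1-ν} |I_P|` and has mean zero on every
longer dyadic interval (`dyadicAvg_step`), which is the truncation `|I_P| > 2^{k+ν}`.  Multiplying
by `sgn(φ_{p_T})` once more gives back `φ_{P_i}`, since the sign squares to one on `I_T`.
-/

open MeasureTheory Set
open scoped ENNReal

noncomputable section

/-- A dyadic interval `[n 2^k, (n+1) 2^k) ⊆ [0,∞)`. -/
structure DyadicInterval where
  n : ℕ
  k : ℤ
  deriving DecidableEq

namespace DyadicInterval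

/-- The length `2^k` of a dyadic interval. -/
def len (I : DyadicInterval) : ℝ := 2 ^ I.k

/-- The left endpoint `n 2^k` of a dyadic interval. -/
def lo (I : DyadicInterval) : ℝ := I.n * 2 ^ I.k

/-- A dyadic interval as a subset of `ℝ`. -/
def toSet (I : DyadicInterval) : Set ℝ := Set.Ico I.lo (I.lo + I.len)

end DyadicInterval

/-- The Walsh function of index `m` (Paley ordering): for `y ∈ [0,1)` with binary digits
`y_i`, `W_m(y) = (-1)^{∑ m_i y_i}`. -/
def walshF (m : ℕ) (y : ℝ) : ℝ :=
  ∏ i ∈ Finset.range m, if m.testBit i then (-1 : ℝ) ^ ⌊y * 2 ^ (i + 1)⌋ else 1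

/-- The Walsh wave packet of the rectangle `I × ω`.  For a tile (a rectangle of area one) this
is the unique family satisfying `φ_{I×[0,2^n)} = |I|^{-1/2} 1_I` together with the recursions
`φ_{I×ω_r} = (φ_{I_l×ω} − φ_{I_r×ω})/√2` and `φ_{I×ω_l} = (φ_{I_l×ω} + φ_{I_r×ω})/√2`. -/
def wavePacket (I ω : DyadicInterval) (x : ℝ) : ℝ :=
  I.toSet.indicator (fun x => I.len ^ (-(1 : ℝ) / 2) * walshF ω.n ((x - I.lo) / I.len)) x

/-- `⟨f, g⟩ = ∫_0^∞ f g`. -/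
def innerF (f g : ℝ → ℝ) : ℝ := ∫ x in Set.Ici (0 : ℝ), f x * g x

/-- A tile: a dyadic rectangle of area one. -/
structure Tile where
  I : DyadicInterval
  ω : DyadicInterval
  area : I.k + ω.k = 0

/-- The Walsh wave packet of a tile. -/
def Tile.wp (p : Tile) : ℝ → ℝ := wavePacket p.I p.ω

/-- A tile as a subset of `[0,∞) × [0,∞)`. -/
def Tile.toSet (p : Tile) : Set (ℝ × ℝ) := p.I.toSet ×ˢ p.ω.toSet

/-- A quartile: a dyadic rectangle of area four. -/
structure Quartile where
  I : DyadicInterval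
  ω : DyadicInterval
  area : I.k + ω.k = 2

namespace Quartile

/-- The frequency interval `ω_{P_{i+1}}` (the `i`-th dyadic grandchild of `ω_P`, `i : Fin 4`,
in increasing order). -/
def freq (P : Quartile) (i : Fin 4) : DyadicInterval := ⟨4 * P.ω.n + i.val, P.ω.k - 2⟩

/-- The tile `P_{i+1} = I_P × ω_{P_{i+1}}` as a subset of the plane, for `i : Fin 4`. -/
def subtileSet (P : Quartile) (i : Fin 4) : Set (ℝ × ℝ) := P.I.toSet ×ˢ (P.freq i).toSet

/-- The Walsh wave packet `φ_{P_{i+1}}` for `i : Fin 4`. -/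
def wp (P : Quartile) (i : Fin 4) : ℝ → ℝ := wavePacket P.I (P.freq i)

end Quartile

instance : DecidableEq Quartile := fun P Q =>
  decidable_of_iff (P.I = Q.I ∧ P.ω = Q.ω) (by cases P; cases Q; simp)

/-- `(T, ξ, I_T)` is a tree: `ξ ∈ [0,∞)` and every `P ∈ T` has `I_P ⊆ I_T` and `ξ ∈ ω_P`. -/
def IsTree (T : Finset Quartile) (ξ : ℝ) (It : DyadicInterval) : Prop :=
  0 ≤ ξ ∧ ∀ P ∈ T, P.I.toSet ⊆ It.toSet ∧ ξ ∈ P.ω.toSet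

/-- An `i`-overlapping tree (`i : Fin 4` indexes `P_1,…,P_4`): `ξ_T ∈ ω_{P_{i+1}}` for all `P`. -/
def IsOverlapping (i : Fin 4) (T : Finset Quartile) (ξ : ℝ) (It : DyadicInterval) : Prop :=
  IsTree T ξ It ∧ ∀ P ∈ T, ξ ∈ (P.freq i).toSet

/-- An `i`-lacunary tree: `j`-overlapping for some `j ≠ i`. -/
def IsLacunary (i : Fin 4) (T : Finset Quartile) (ξ : ℝ) (It : DyadicInterval) : Prop :=
  ∃ j, j ≠ i ∧ IsOverlapping j T ξ It

/-- `ω_T`: the dyadic interval of length `|I_T|⁻¹` containing `ξ`; `p_T = I_T × ω_T`. -/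
def topFreq (It : DyadicInterval) (ξ : ℝ) : DyadicInterval := ⟨(⌊ξ * 2 ^ It.k⌋).toNat, -It.k⟩

/-- The dyadic interval of length `2^k` containing `x ≥ 0`. -/
def dyadicPiece (k : ℤ) (x : ℝ) : Set ℝ :=
  Set.Ico ((⌊x / 2 ^ k⌋ : ℝ) * 2 ^ k) (((⌊x / 2 ^ k⌋ : ℝ) + 1) * 2 ^ k)

/-- The dyadic averaging operator `A_k[f](x) = |I|⁻¹ ∫_I f` with `I ∋ x` dyadic, `|I| = 2^k`. -/
def dyadicAvg (k : ℤ) (f : ℝ → ℝ) (x : ℝ) : ℝ :=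
  ((2 : ℝ) ^ k)⁻¹ * ∫ y in dyadicPiece k x, f y

/-- The `r`-variation seminorm of `g : ℤ → ℝ` over the index set `S ⊆ ℤ`:
the supremum of `(∑_{j=1}^N |g(k_j) − g(k_{j−1})|^r)^{1/r}` over finite increasing
sequences `k_0 < ⋯ < k_N` in `S`. -/
def varNorm (r : ℝ) (S : Set ℤ) (g : ℤ → ℝ) : ℝ≥0∞ :=
  ⨆ (N : ℕ) (k : ℕ → ℤ) (_ : StrictMono k) (_ : ∀ j ≤ N, k j ∈ S),
    (∑ j ∈ Finset.range N, ENNReal.ofReal (|g (k (j + 1)) - g (k j)| ^ r)) ^ (1 / r)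

/-- The dyadic `L^t` Hardy–Littlewood maximal operator `M^t[f](x) = sup_k (A_k[|f|^t](x))^{1/t}`. -/
def maxOp (t : ℝ) (f : ℝ → ℝ) (x : ℝ) : ℝ≥0∞ :=
  ⨆ k : ℤ, ((ENNReal.ofReal ((2 : ℝ) ^ k))⁻¹ *
    ∫⁻ y in dyadicPiece k x, ENNReal.ofReal (|f y| ^ t)) ^ (1 / t)

/-- Given a strictly increasing `kk : ℤ → ℤ` and coefficients `a : ℤ → ℝ`, the coefficient
`a_m` where `m` is the (unique) integer with `kk (m-1) ≤ K < kk m` (`K = log₂|I_P|`),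
and `0` if no such `m` exists. -/
def linCoeff (kk : ℤ → ℤ) (a : ℤ → ℝ) (K : ℤ) : ℝ :=
  letI := Classical.propDecidable (∃ m : ℤ, kk (m - 1) ≤ K ∧ K < kk m)
  if h : ∃ m : ℤ, kk (m - 1) ≤ K ∧ K < kk m then a h.choose else 0

/-- Linearization data for the `r`-variation: measurably in `x`, a strictly increasing
sequence of integers `k_j(x)` and coefficients `a_j(x)` with `∑_j |a_j(x)|^{r'} ≤ 1`,
`r' = r/(r-1)`. -/
structure LinData (r : ℝ) where
  kseq : ℝ → ℤ → ℤ
  aseq : ℝ → ℤ → ℝ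
  mono : ∀ x, StrictMono (kseq x)
  meas_k : ∀ j, Measurable fun x => kseq x j
  meas_a : ∀ j, Measurable fun x => aseq x j
  abound : ∀ x, ∀ s : Finset ℤ, ∑ j ∈ s, |aseq x j| ^ (r / (r - 1)) ≤ 1

/-- `a_P(x)` for a quartile `P`. -/
def LinData.coeff {r : ℝ} (L : LinData r) (P : Quartile) (x : ℝ) : ℝ :=
  linCoeff (L.kseq x) (L.aseq x) P.I.k

/-- The modified wave packets: `φ̃_{P_3}(x) = a_P(x) φ_{P_3}(x)` and `φ̃_{P_i} = φ_{P_i}`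
for `i ≠ 3` (here `i : Fin 4`, so index `2` plays the role of `3`). -/
def LinData.wp {r : ℝ} (L : LinData r) (P : Quartile) (i : Fin 4) (x : ℝ) : ℝ :=
  (if i = (2 : Fin 4) then L.coeff P x else 1) * P.wp i x

/-- `size_i(Ps, f)`: the sup of `(|I_T|⁻¹ ∑_{P ∈ T} |⟨f, φ̃_{P_i}⟩|²)^{1/2}` over
`i`-lacunary trees `T ⊆ Ps`. -/
def treeSize {r : ℝ} (L : LinData r) (i : Fin 4) (Ps : Set Quartile) (f : ℝ → ℝ) : ℝ≥0∞ :=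
  ⨆ (T : Finset Quartile) (ξ : ℝ) (It : DyadicInterval)
    (_ : IsLacunary i T ξ It) (_ : (T : Set Quartile) ⊆ Ps),
    ENNReal.ofReal ((It.len)⁻¹ * ∑ P ∈ T, innerF f (L.wp P i) ^ 2) ^ ((1 : ℝ) / 2)

/-- Lebesgue measure restricted to `[0,∞)`. -/
def mu0 : Measure ℝ := volume.restrict (Set.Ici 0)

end
/-! ### Walsh functions: bit recursion and restriction to subintervals -/

section Walsh

/-- The range of the product defining `walshF m` may be enlarged, as bits at positions `≥ m`
vanish. -/
lemma walshF_eq_prod {m N : ℕ} (h : m ≤ N) (y : ℝ) :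
    walshF m y =
      ∏ i ∈ Finset.range N, if m.testBit i then (-1 : ℝ) ^ ⌊y * 2 ^ (i + 1)⌋ else 1 := by
  unfold walshF
  apply Finset.prod_subset
  · intro i hi
    simp only [Finset.mem_range] at *
    omega
  · intro i _ hi
    have hmi : m ≤ i := by simpa using hi
    have : m.testBit i = false :=
      Nat.testBit_lt_two_pow
        (lt_of_lt_of_le m.lt_two_pow_self (Nat.pow_le_pow_right (by norm_num) hmi))
    simp [this]

/-- Splitting off the lowest bit of the index; this encodes the recursion defining the Walsh wave
packets. -/
lemma walshF_rec (m : ℕ) (y : ℝ) :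
    walshF m y = (if m.testBit 0 then (-1 : ℝ) ^ ⌊y * 2⌋ else 1) * walshF (m / 2) (y * 2) := by
  rw [walshF_eq_prod (Nat.le_succ m), walshF_eq_prod (Nat.div_le_self m 2),
    Finset.prod_range_succ', mul_comm]
  congr 1
  · simp
  · refine Finset.prod_congr rfl fun i _ => ?_
    rw [Nat.testBit_succ, pow_succ' 2 (i + 1), mul_assoc]

lemma neg_one_zpow_sq (j : ℤ) : (-1 : ℝ) ^ j * (-1 : ℝ) ^ j = 1 := by
  rw [← mul_zpow]; norm_num

lemma walshF_mul_self (m : ℕ) (y : ℝ) : walshF m y * walshF m y = 1 := by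
  unfold walshF
  rw [← Finset.prod_mul_distrib]
  refine Finset.prod_eq_one fun i _ => ?_
  split_ifs
  · exact neg_one_zpow_sq _
  · norm_num

lemma walshF_add_int (m : ℕ) (r : ℤ) (y : ℝ) : walshF m (r + y) = walshF m y := by
  unfold walshF
  refine Finset.prod_congr rfl fun i _ => ?_
  split_ifs
  · have : ((r : ℝ) + y) * 2 ^ (i + 1) = y * 2 ^ (i + 1) + ((2 * (r * 2 ^ i) : ℤ) : ℝ) := by
      push_cast; ring
    rw [this, Int.floor_add_intCast, zpow_add₀ (by norm_num), zpow_mul]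
    norm_num
  · rfl

lemma floor_div_two_pow (x : ℝ) (s : ℕ) : ⌊x / 2 ^ s⌋ = ⌊x⌋ / 2 ^ s := by
  have h : (0 : ℝ) < 2 ^ s := by positivity
  have h' : (0 : ℤ) < 2 ^ s := by positivity
  apply le_antisymm
  · rw [Int.le_ediv_iff_mul_le h', Int.le_floor]
    push_cast
    rw [← le_div_iff₀ h]
    exact Int.floor_le _
  · rw [Int.le_floor, le_div_iff₀ h]
    have := Int.ediv_mul_le ⌊x⌋ h'.ne'
    have h2 : ((⌊x⌋ / 2 ^ s * 2 ^ s : ℤ) : ℝ) ≤ ⌊x⌋ := by exact_mod_cast this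
    push_cast at h2
    exact h2.trans (Int.floor_le _)

/-- On a dyadic subinterval of relative length `2^{-s}`, the Walsh function of index `M` is a
constant sign times the rescaled Walsh function of index `⌊M / 2^s⌋`. -/
lemma walshF_restrict (r : ℤ) (s M : ℕ) :
    ∃ ε : ℝ, ε * ε = 1 ∧ ∀ t : ℝ, 0 ≤ t → t < 1 →
      walshF M ((r + t) / 2 ^ s) = ε * walshF (M / 2 ^ s) t := by
  induction s generalizing M with
  | zero => exact ⟨1, by norm_num, fun t _ _ => by simp [walshF_add_int]⟩
  | succ s ih =>
    obtain ⟨ε, hε, h⟩ := ih (M / 2)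
    refine ⟨(if M.testBit 0 then (-1 : ℝ) ^ (r / 2 ^ s) else 1) * ε, ?_, fun t h0 h1 => ?_⟩
    · have h1 : (if M.testBit 0 then (-1 : ℝ) ^ (r / 2 ^ s) else 1) *
          (if M.testBit 0 then (-1 : ℝ) ^ (r / 2 ^ s) else 1) = 1 := by
        split_ifs
        · exact neg_one_zpow_sq _
        · norm_num
      rw [mul_mul_mul_comm, h1, hε, one_mul]
    · have e : ((r : ℝ) + t) / 2 ^ (s + 1) * 2 = (r + t) / 2 ^ s := by
        rw [pow_succ]; field_simp
      have hf : ⌊(r : ℝ) + t⌋ = r := by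
        rw [Int.floor_eq_iff]; constructor <;> linarith
      rw [walshF_rec, e, h t h0 h1, floor_div_two_pow, hf, Nat.div_div_eq_div_mul,
        ← pow_succ', mul_assoc]

/-- The factor of the Walsh function of index `4 n + i` that comes from the two lowest bits. -/
noncomputable def lowFactor (i : Fin 4) (t : ℝ) : ℝ :=
  (if i.val.testBit 0 then (-1 : ℝ) ^ ⌊t * 2⌋ else 1) *
    (if i.val.testBit 1 then (-1 : ℝ) ^ ⌊t * 2 * 2⌋ else 1)

lemma walshF_four_mul_add (n : ℕ) (i : Fin 4) (t : ℝ) :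
    walshF (4 * n + i.val) t = lowFactor i t * walshF n (t * 2 * 2) := by
  have h0 : (4 * n + i.val).testBit 0 = i.val.testBit 0 := by
    fin_cases i <;> simp [Nat.testBit_zero] <;> omega
  have h1 : ((4 * n + i.val) / 2).testBit 0 = i.val.testBit 1 := by
    rw [Nat.testBit_succ]
    fin_cases i <;> simp [Nat.testBit_zero] <;> omega
  have h2 : (4 * n + i.val) / 2 / 2 = n := by omega
  rw [walshF_rec, walshF_rec (_ / 2), h0, h1, h2, lowFactor, ← mul_assoc (ite _ _ _)]

lemma walshF_mul_sibling (n : ℕ) (i i' : Fin 4) (t : ℝ) :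
    walshF (4 * n + i'.val) t * walshF (4 * n + i.val) t = lowFactor i' t * lowFactor i t := by
  rw [walshF_four_mul_add, walshF_four_mul_add, mul_mul_mul_comm, walshF_mul_self, mul_one]

end Walsh

/-! ### Dyadic averages of step functions -/

section Average

/-- The dyadic interval of length `2^k` and (possibly negative) index `N`. -/
def dyadicIco (k N : ℤ) : Set ℝ := Ico ((N : ℝ) * 2 ^ k) (((N : ℝ) + 1) * 2 ^ k)

lemma mem_dyadicIco {k N : ℤ} {y : ℝ} : y ∈ dyadicIco k N ↔ ⌊y / 2 ^ k⌋ = N := by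
  have h : (0 : ℝ) < 2 ^ k := by positivity
  rw [dyadicIco, mem_Ico, Int.floor_eq_iff, le_div_iff₀ h, div_lt_iff₀ h]

lemma measurableSet_dyadicIco (k N : ℤ) : MeasurableSet (dyadicIco k N) := measurableSet_Ico

lemma volume_dyadicIco (k N : ℤ) : volume.real (dyadicIco k N) = 2 ^ k := by
  have h : (0 : ℝ) < 2 ^ k := by positivity
  rw [dyadicIco, Real.volume_real_Ico_of_le (by nlinarith)]
  ring

lemma dyadicIco_succ (k N : ℤ) :
    dyadicIco (k + 1) N = dyadicIco k (2 * N) ∪ dyadicIco k (2 * N + 1) := by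
  ext y
  simp only [mem_union, mem_dyadicIco]
  have : y / 2 ^ (k + 1) = y / 2 ^ k / 2 ^ 1 := by
    rw [zpow_add₀ (by norm_num)]; field_simp
  rw [this, floor_div_two_pow]
  omega

lemma disjoint_dyadicIco (k N : ℤ) : Disjoint (dyadicIco k (2 * N)) (dyadicIco k (2 * N + 1)) := by
  rw [Set.disjoint_left]
  intro y
  simp only [mem_dyadicIco]
  omega

lemma floor_coarse {k b : ℤ} (hkb : k ≤ b) (y : ℝ) :
    ⌊y / 2 ^ b⌋ = ⌊y / 2 ^ k⌋ / 2 ^ (b - k).toNat := by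
  rw [← floor_div_two_pow, div_div, ← zpow_natCast, ← zpow_add₀ (by norm_num)]
  congr 3
  omega

/-- A step function at scale `2^b` is constant on dyadic intervals of length `2^k`, `k ≤ b`. -/
lemma const_of_le {F : ℤ → ℝ} {b k : ℤ} (hkb : k ≤ b) (N : ℤ) :
    IntegrableOn (fun y : ℝ => F ⌊y / 2 ^ b⌋) (dyadicIco k N) ∧
      ∫ y in dyadicIco k N, F ⌊y / 2 ^ b⌋ = 2 ^ k * F (N / 2 ^ (b - k).toNat) := by
  have he : EqOn (fun y : ℝ => F ⌊y / 2 ^ b⌋) (fun _ => F (N / 2 ^ (b - k).toNat))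
      (dyadicIco k N) := by
    intro y hy
    simp only
    rw [floor_coarse hkb, mem_dyadicIco.1 hy]
  constructor
  · refine IntegrableOn.congr_fun ?_ he.symm (measurableSet_dyadicIco k N)
    exact integrableOn_const (by simp [dyadicIco])
  · rw [setIntegral_congr_fun (measurableSet_dyadicIco k N) he, setIntegral_const,
      volume_dyadicIco, smul_eq_mul]

/-- By induction on the scale, starting from the pairs of siblings at scale `2^b`. -/
lemma cancel_of_gt {F : ℤ → ℝ} (hF : ∀ q, F (2 * q + 1) = -F (2 * q)) (b : ℤ) (m : ℕ) (N : ℤ) :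
    IntegrableOn (fun y : ℝ => F ⌊y / 2 ^ b⌋) (dyadicIco (b + 1 + m) N) ∧
      ∫ y in dyadicIco (b + 1 + m) N, F ⌊y / 2 ^ b⌋ = 0 := by
  induction m generalizing N with
  | zero =>
    obtain ⟨h1, h2⟩ := const_of_le (F := F) (le_refl b) (2 * N)
    obtain ⟨h3, h4⟩ := const_of_le (F := F) (le_refl b) (2 * N + 1)
    rw [Nat.cast_zero, add_zero, dyadicIco_succ]
    refine ⟨h1.union h3, ?_⟩
    rw [setIntegral_union (disjoint_dyadicIco b N) (measurableSet_dyadicIco _ _) h1 h3, h2, h4]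
    simp [hF]
  | succ m ih =>
    obtain ⟨h1, h2⟩ := ih (2 * N)
    obtain ⟨h3, h4⟩ := ih (2 * N + 1)
    rw [Nat.cast_succ, ← add_assoc, dyadicIco_succ]
    refine ⟨h1.union h3, ?_⟩
    rw [setIntegral_union (disjoint_dyadicIco _ N) (measurableSet_dyadicIco _ _) h1 h3, h2, h4,
      add_zero]

lemma dyadicPiece_eq (k : ℤ) (x : ℝ) : dyadicPiece k x = dyadicIco k ⌊x / 2 ^ k⌋ := rfl

/-- A step function at scale `2^b` whose values on the two halves of every dyadic interval of
length `2^{b+1}` are opposite is fixed by `A_k` for `k ≤ b` and annihilated for `k > b`.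
Integrability is recorded to exchange averages with sums. -/
lemma dyadicAvg_step {F : ℤ → ℝ} (hF : ∀ q, F (2 * q + 1) = -F (2 * q)) (b k : ℤ) (x : ℝ) :
    IntegrableOn (fun y : ℝ => F ⌊y / 2 ^ b⌋) (dyadicPiece k x) ∧
      dyadicAvg k (fun y : ℝ => F ⌊y / 2 ^ b⌋) x = if k ≤ b then F ⌊x / 2 ^ b⌋ else 0 := by
  rw [dyadicAvg, dyadicPiece_eq]
  split_ifs with h
  · obtain ⟨h1, h2⟩ := const_of_le (F := F) h ⌊x / 2 ^ k⌋
    refine ⟨h1, ?_⟩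
    rw [h2, ← floor_coarse h, inv_mul_cancel_left₀ (by positivity)]
  · obtain ⟨m, hm⟩ := Int.eq_ofNat_of_zero_le (show 0 ≤ k - (b + 1) by omega)
    obtain rfl : k = b + 1 + m := by omega
    obtain ⟨h1, h2⟩ := cancel_of_gt hF b m ⌊x / 2 ^ (b + 1 + m : ℤ)⌋
    exact ⟨h1, by rw [h2, mul_zero]⟩

end Average

/-! ### Wave packets in an overlapping tree -/

section Tree

/-- The product of the two low-bit factors depends only on `⌊2^{1+ν} t⌋`, with opposite values at
`2 q` and `2 q + 1`: for `ν = 0` the indices differ only in bit `0`, and for `ν = 1` they differ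
in bit `1`, which contributes the factor `(-1)^⌊4 t⌋`. -/
lemma lowFactor_mul_step {i i' : Fin 4} (hne : i ≠ i') (v : ℕ)
    (hv : v = if (i.val < 2 ↔ i'.val < 2) then 0 else 1) :
    ∃ E : ℤ → ℝ, (∀ q, E (2 * q + 1) = -E (2 * q)) ∧
      ∀ t : ℝ, lowFactor i' t * lowFactor i t = E ⌊t * 2 ^ (1 + v)⌋ := by
  have hodd : ∀ q : ℤ, (-1 : ℝ) ^ (2 * q + 1) = -(-1 : ℝ) ^ (2 * q) := fun q => by
    rw [zpow_add₀ (by norm_num)]; simp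
  by_cases h : (i.val < 2 ↔ i'.val < 2)
  · rw [if_pos h] at hv
    subst hv
    refine ⟨fun j => (-1 : ℝ) ^ j, hodd, fun t => ?_⟩
    have h2 := neg_one_zpow_sq ⌊t * 2 * 2⌋
    fin_cases i <;> fin_cases i' <;> simp [lowFactor, Nat.testBit_succ] at h hne ⊢ <;>
      linear_combination (-1 : ℝ) ^ ⌊t * 2⌋ * h2
  · rw [if_neg h] at hv
    subst hv
    refine ⟨fun j => (if i.val.testBit 0 = i'.val.testBit 0 then 1 else (-1 : ℝ) ^ (j / 2)) *
      (-1 : ℝ) ^ j, fun q => ?_, fun t => ?_⟩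
    · have : (2 * q + 1) / 2 = 2 * q / 2 := by omega
      simp only [this, hodd, mul_neg]
    · have e : t * 2 ^ (1 + 1) = t * 2 * 2 := by ring
      have hf : ⌊t * 2 * 2⌋ / 2 = ⌊t * 2⌋ := by
        have := floor_div_two_pow (t * 2 * 2) 1
        simp only [pow_one] at this
        rw [← this, mul_div_cancel_right₀ _ two_ne_zero]
      have h2 := neg_one_zpow_sq ⌊t * 2⌋
      simp only [e, hf]
      fin_cases i <;> fin_cases i' <;> simp [lowFactor, Nat.testBit_succ] at h hne ⊢ <;>
        first
        | linear_combination (-1 : ℝ) ^ ⌊t * 2 * 2⌋ * h2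
        | ring

lemma sign_pos_mul {A w : ℝ} (hA : 0 < A) (hw : w * w = 1) : Real.sign (A * w) = w := by
  rcases mul_self_eq_one_iff.1 hw with rfl | rfl
  · rw [mul_one, Real.sign_of_pos hA]
  · rw [Real.sign_of_neg (by linarith)]

lemma sign_wavePacket {I ω : DyadicInterval} {x : ℝ} (hx : x ∈ I.toSet) :
    Real.sign (wavePacket I ω x) = walshF ω.n ((x - I.lo) / I.len) := by
  rw [wavePacket, indicator_of_mem hx]
  refine sign_pos_mul (Real.rpow_pos_of_pos ?_ _) (walshF_mul_self _ _)
  unfold DyadicInterval.len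
  positivity

/-- A dyadic subinterval has length `2^{-s}` relative to the large interval and sits at an
integer multiple `r` of its own length from the left endpoint. -/
lemma exists_scale {J I : DyadicInterval} (h : J.toSet ⊆ I.toSet) :
    ∃ (s : ℕ) (r : ℤ), I.k = J.k + s ∧
      ∀ y : ℝ, (y - I.lo) / I.len = (r + (y - J.lo) / J.len) / 2 ^ s := by
  have hJ : (0 : ℝ) < 2 ^ J.k := by positivity
  have hlt : J.lo < J.lo + J.len := by unfold DyadicInterval.len; linarith
  obtain ⟨h1, h2⟩ := (Ico_subset_Ico_iff hlt).1 h
  have hlen : J.len ≤ I.len := by linarith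
  have hk : J.k ≤ I.k := (zpow_le_zpow_iff_right₀ (by norm_num : (1 : ℝ) < 2)).1 hlen
  obtain ⟨s, hs⟩ := Int.eq_ofNat_of_zero_le (sub_nonneg.2 hk)
  have hs' : I.k = J.k + s := by omega
  refine ⟨s, J.n - I.n * 2 ^ s, hs', fun y => ?_⟩
  simp only [DyadicInterval.lo, DyadicInterval.len]
  rw [hs', zpow_add₀ (by norm_num), zpow_natCast]
  push_cast
  field_simp
  ring

/-- The frequency index of the top tile, with its `s` lowest bits dropped, is that of `P_{i'}`. -/
lemma topFreq_div {P : Quartile} {i' : Fin 4} {ξ : ℝ} {It : DyadicInterval} {s : ℕ}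
    (hs : It.k = P.I.k + s) (hξ : ξ ∈ (P.freq i').toSet) :
    (topFreq It ξ).n / 2 ^ s = 4 * P.ω.n + i'.val := by
  set Q := 4 * P.ω.n + i'.val with hQ
  have hk : P.ω.k - 2 = -P.I.k := by have := P.area; omega
  simp only [DyadicInterval.toSet, DyadicInterval.lo, DyadicInterval.len, Quartile.freq, hk,
    ← hQ, mem_Ico, zpow_neg] at hξ
  obtain ⟨h1, h2⟩ := hξ
  have hp : (0 : ℝ) < 2 ^ P.I.k := by positivity
  have hps : (0 : ℝ) < 2 ^ s := by positivity
  have e1 : (Q : ℝ) ≤ ξ * 2 ^ P.I.k := by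
    rwa [← div_eq_mul_inv, div_le_iff₀ hp] at h1
  have e2 : ξ * 2 ^ P.I.k < Q + 1 := by
    rwa [← add_one_mul, ← div_eq_mul_inv, lt_div_iff₀ hp] at h2
  have hf : ⌊ξ * 2 ^ P.I.k⌋ = Q := by
    rw [Int.floor_eq_iff]; exact ⟨by exact_mod_cast e1, by exact_mod_cast e2⟩
  have hm : ξ * 2 ^ P.I.k = ξ * 2 ^ It.k / 2 ^ s := by
    rw [hs, zpow_add₀ (by norm_num), zpow_natCast]; field_simp
  rw [hm, floor_div_two_pow] at hf
  have hnn : 0 ≤ ⌊ξ * 2 ^ It.k⌋ := by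
    by_contra hneg
    have := Int.ediv_neg_of_neg_of_pos (not_le.1 hneg) (show (0 : ℤ) < 2 ^ s by positivity)
    omega
  obtain ⟨M, hM⟩ := Int.eq_ofNat_of_zero_le hnn
  simp only [topFreq, hM] at hf ⊢
  simp only [Int.toNat_natCast]
  exact_mod_cast hf

/-- After multiplication by `sgn φ_{p_T}`, the packet `φ_{P_i}` is a step function at scale
`2^{-1-ν} |I_P|` with opposite values on dyadic siblings. -/
lemma packet_step {i i' : Fin 4} (hne : i ≠ i') (v : ℕ)
    (hv : v = if (i.val < 2 ↔ i'.val < 2) then 0 else 1)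
    {P : Quartile} {ξ : ℝ} {It : DyadicInterval}
    (hsub : P.I.toSet ⊆ It.toSet) (hξ : ξ ∈ (P.freq i').toSet) :
    ∃ F : ℤ → ℝ, (∀ q, F (2 * q + 1) = -F (2 * q)) ∧
      ∀ y : ℝ, Real.sign (wavePacket It (topFreq It ξ) y) * P.wp i y =
        F ⌊y / 2 ^ (P.I.k - (1 + v : ℕ))⌋ := by
  obtain ⟨E, hE, hlow⟩ := lowFactor_mul_step hne v hv
  obtain ⟨s, r, hs, hscale⟩ := exists_scale hsub
  obtain ⟨ε, -, hε⟩ := walshF_restrict r s (topFreq It ξ).n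
  set a : ℤ := 2 ^ (1 + v) with ha
  have ha2 : a = 2 * 2 ^ v := by rw [ha, pow_add, pow_one]
  refine ⟨fun j => if 0 ≤ j - a * P.I.n ∧ j - a * P.I.n < a then
    ε * P.I.len ^ (-(1 : ℝ) / 2) * E (j - a * P.I.n) else 0, fun q => ?_, fun y => ?_⟩
  · have e1 : 2 * q - a * P.I.n = 2 * (q - 2 ^ v * P.I.n) := by rw [ha2]; ring
    have e2 : 2 * q + 1 - a * P.I.n = 2 * (q - 2 ^ v * P.I.n) + 1 := by rw [ha2]; ring
    simp only [e1, e2, hE]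
    have hc : (0 ≤ 2 * (q - 2 ^ v * P.I.n) + 1 ∧ 2 * (q - 2 ^ v * P.I.n) + 1 < a) ↔
        (0 ≤ 2 * (q - 2 ^ v * P.I.n) ∧ 2 * (q - 2 ^ v * P.I.n) < a) := by
      rw [ha2]; omega
    simp only [hc]
    split_ifs <;> simp
  · have hp : (0 : ℝ) < 2 ^ P.I.k := by positivity
    have hpv : (0 : ℝ) < 2 ^ (1 + v) := by positivity
    set t := (y - P.I.lo) / P.I.len with ht
    have hty : y / 2 ^ (P.I.k - (1 + v : ℕ)) = t * 2 ^ (1 + v) + ((a * P.I.n : ℤ) : ℝ) := by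
      rw [ht, zpow_sub₀ (by norm_num), zpow_natCast]
      simp only [DyadicInterval.lo, DyadicInterval.len, ha]
      push_cast
      field_simp
      ring
    have hmem : y ∈ P.I.toSet ↔ 0 ≤ t ∧ t < 1 := by
      have hl : 0 < P.I.len := hp
      rw [DyadicInterval.toSet, mem_Ico, ht, le_div_iff₀ hl, div_lt_iff₀ hl, zero_mul, one_mul,
        sub_nonneg, sub_lt_iff_lt_add']
    have hfl : (0 ≤ ⌊t * 2 ^ (1 + v)⌋ ∧ ⌊t * 2 ^ (1 + v)⌋ < a) ↔ 0 ≤ t ∧ t < 1 := by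
      rw [Int.floor_nonneg, Int.floor_lt, ha]
      push_cast
      rw [mul_nonneg_iff_of_pos_right hpv, mul_lt_iff_lt_one_left hpv]
    have hj : ⌊y / 2 ^ (P.I.k - (1 + v : ℕ))⌋ - a * P.I.n = ⌊t * 2 ^ (1 + v)⌋ := by
      rw [hty, Int.floor_add_intCast, add_sub_cancel_right]
    beta_reduce
    rw [hj]
    by_cases hy : y ∈ P.I.toSet
    · obtain ⟨h0, h1⟩ := hmem.1 hy
      rw [if_pos (hfl.2 ⟨h0, h1⟩)]
      have hw := walshF_mul_sibling P.ω.n i i' t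
      rw [sign_wavePacket (hsub hy), hscale y, hε _ h0 h1, topFreq_div hs hξ, Quartile.wp,
        wavePacket, indicator_of_mem hy, ← hlow t, ← hw]
      simp only [Quartile.freq, ← ht]
      ring
    · have h0 : P.wp i y = 0 := by rw [Quartile.wp, wavePacket, indicator_of_notMem hy]
      rw [if_neg fun h => hy (hmem.2 (hfl.1 h)), h0, mul_zero]

lemma sign_sq_mul_packet {P : Quartile} {It ω : DyadicInterval} (hsub : P.I.toSet ⊆ It.toSet)
    (i : Fin 4) (x : ℝ) :
    Real.sign (wavePacket It ω x) * (Real.sign (wavePacket It ω x) * P.wp i x) = P.wp i x := by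
  by_cases hx : x ∈ P.I.toSet
  · rw [sign_wavePacket (hsub hx), ← mul_assoc, walshF_mul_self, one_mul]
  · have h0 : P.wp i x = 0 := by rw [Quartile.wp, wavePacket, indicator_of_notMem hx]
    rw [h0, mul_zero, mul_zero]

end Tree

/-- **Claim 2.1.** Truncation of lacunary tree sums via dyadic averaging: if `T` is
`i'`-overlapping and `i ≠ i'`, with `ν = 0` when `{i,i'} = {1,2}` or `{3,4}` and `ν = 1`
otherwise, then `∑_{P ∈ T, |I_P| > 2^{k+ν}} c_P φ_{P_i}
  = sgn(φ_{p_T}) A_k[sgn(φ_{p_T}) ∑_{P ∈ T} c_P φ_{P_i}]`.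
(Here `i, i' : Fin 4` index the tiles `P_1, …, P_4`.) -/
theorem truncation_of_tree_sums
    (i i' : Fin 4) (hne : i ≠ i') (T : Finset Quartile) (ξ : ℝ) (It : DyadicInterval)
    (hT : IsOverlapping i' T ξ It)
    (ν : ℤ) (hν : ν = if (i.val < 2 ↔ i'.val < 2) then 0 else 1)
    (c : Quartile → ℝ) (k : ℤ) (x : ℝ) :
    ∑ P ∈ T.filter (fun P => k + ν < P.I.k), c P * P.wp i x =
      Real.sign (wavePacket It (topFreq It ξ) x) *
        dyadicAvg k
          (fun y => Real.sign (wavePacket It (topFreq It ξ) y) * ∑ P ∈ T, c P * P.wp i y) x := by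
  obtain ⟨v, hv, hνv⟩ : ∃ v : ℕ, (v = if (i.val < 2 ↔ i'.val < 2) then 0 else 1) ∧ ν = v :=
    ⟨_, rfl, by rw [hν]; split_ifs <;> simp⟩
  obtain ⟨⟨-, htree⟩, hover⟩ := hT
  set σ : ℝ → ℝ := fun y => Real.sign (wavePacket It (topFreq It ξ) y) with hσ
  have key : ∀ P ∈ T, IntegrableOn (fun y => σ y * P.wp i y) (dyadicPiece k x) ∧
      dyadicAvg k (fun y => σ y * P.wp i y) x =
        if k + ν < P.I.k then σ x * P.wp i x else 0 := by
    intro P hP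
    obtain ⟨F, hF, hstep⟩ := packet_step hne v hv (htree P hP).1 (hover P hP)
    have hfun : (fun y => σ y * P.wp i y) =
        fun y : ℝ => F ⌊y / 2 ^ (P.I.k - (1 + v : ℕ))⌋ := funext hstep
    have hc : k ≤ P.I.k - (1 + v : ℕ) ↔ k + ν < P.I.k := by
      rw [hνv]; push_cast; omega
    have h := dyadicAvg_step hF (P.I.k - (1 + v : ℕ)) k x
    rw [← hfun] at h
    simp only [← hstep x, hc] at h
    exact h
  have hsum : dyadicAvg k (fun y => σ y * ∑ P ∈ T, c P * P.wp i y) x =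
      ∑ P ∈ T, c P * dyadicAvg k (fun y => σ y * P.wp i y) x := by
    have e : (fun y => σ y * ∑ P ∈ T, c P * P.wp i y) =
        fun y => ∑ P ∈ T, c P * (σ y * P.wp i y) := by
      funext y
      rw [Finset.mul_sum]
      exact Finset.sum_congr rfl fun P _ => by ring
    simp only [dyadicAvg, e]
    rw [integral_finsetSum T fun P hP => (key P hP).1.const_mul (c P), Finset.mul_sum]
    refine Finset.sum_congr rfl fun P _ => ?_
    rw [integral_const_mul]
    ring
  change _ = σ x * dyadicAvg k (fun y => σ y * ∑ P ∈ T, c P * P.wp i y) x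
  rw [hsum, Finset.mul_sum, Finset.sum_filter]
  refine Finset.sum_congr rfl fun P hP => ?_
  rw [(key P hP).2]
  split_ifs
  · have := sign_sq_mul_packet (ω := topFreq It ξ) (htree P hP).1 i x
    rw [mul_left_comm]
    exact congrArg (c P * ·) this.symm
  · simp
end

section
/- If p and p' are tiles with p ∩ p' = ∅, then the Walsh wave packets φ_p and φ_{p'} are orthogonal: ∫_0^∞ φ_p(x) φ_{p'}(x) dx = 0. -/
/-!
The Walsh functions satisfy `W_n((b + y)/2) = ± W_{⌊n/2⌋}(y)` for `y ∈ [0,1)`, with sign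
`(-1)^b` if `n` is odd and `+1` otherwise (`walshF_half`). Two consequences carry the proof.

* Orthogonality on `[0,1)` (`integral_walshF_mul`): halving the interval gives
  `∫₀¹ W_n W_m = ½ (1 + (-1)^(n+m)) ∫₀¹ W_{⌊n/2⌋} W_{⌊m/2⌋}`; for `n ≠ m`, either the parities
  differ and the factor vanishes, or `⌊n/2⌋ ≠ ⌊m/2⌋` and one descends.
* Restriction to a dyadic subinterval (`walshF_restrict`): `W_n((a + y)/2^j) = c W_{⌊n/2^j⌋}(y)`.

If the time intervals of the two tiles are disjoint, the product of the packets vanishes. Otherwise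
the shorter one, `I`, lies in the longer one, `I'`, with `|I'| = 2^j |I|`, so disjointness of the
tiles forces `⌊n'/2^j⌋ ≠ n` for the frequency indices `n, n'`. The restriction of the packet on `I'`
to `I` is a multiple of `W_{⌊n'/2^j⌋}` rescaled to `I`, hence orthogonal to the packet on `I`.
-/

open MeasureTheory Set
open scoped ENNReal

lemma walshF_half (n b : ℕ) {y : ℝ} (hy : y ∈ Ico (0 : ℝ) 1) :
    walshF n ((b + y) / 2) = (if n.testBit 0 then (-1 : ℝ) ^ b else 1) * walshF (n / 2) y := by
  rw [walshF_eq_prod (Nat.le_succ n), walshF_eq_prod (Nat.div_le_self n 2),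
    Finset.prod_range_succ', mul_comm]
  congr 1
  · have : ⌊((b : ℝ) + y) / 2 * 2 ^ (0 + 1)⌋ = (b : ℤ) := by
      rw [Int.floor_eq_iff]
      push_cast
      constructor <;> nlinarith [hy.1, hy.2]
    rw [this, zpow_natCast]
  · refine Finset.prod_congr rfl fun i _ => ?_
    have h2 : ((b : ℝ) + y) / 2 * 2 ^ (i + 1 + 1)
        = y * 2 ^ (i + 1) + ((2 * (b * 2 ^ i) : ℤ) : ℝ) := by
      push_cast
      ring
    -- The shift by `b` changes the floor by an even integer.
    rw [h2, Int.floor_add_intCast, zpow_add₀ (by norm_num), zpow_mul]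
    simp [Nat.testBit_succ]

lemma walshF_restrict_s3 (j : ℕ) (n a : ℕ) :
    ∃ c : ℝ, ∀ y ∈ Ico (0 : ℝ) 1, walshF n ((a + y) / 2 ^ j) = c * walshF (n / 2 ^ j) y := by
  induction j generalizing a with
  | zero =>
    refine ⟨1, fun y _ => ?_⟩
    -- An integer shift changes every floor by an even integer.
    have h : walshF n (a + y) = walshF n y := by
      unfold walshF
      refine Finset.prod_congr rfl fun i _ => ?_
      have h2 : ((a : ℝ) + y) * 2 ^ (i + 1)
          = y * 2 ^ (i + 1) + ((2 * (a * 2 ^ i) : ℤ) : ℝ) := by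
        push_cast
        ring
      rw [h2, Int.floor_add_intCast, zpow_add₀ (by norm_num), zpow_mul]
      simp
    simp [h]
  | succ j ih =>
    obtain ⟨c, hc⟩ := ih (a / 2)
    refine ⟨c * (if (n / 2 ^ j).testBit 0 then (-1 : ℝ) ^ (a % 2) else 1), fun y hy => ?_⟩
    have hb : ((a % 2 : ℕ) : ℝ) ≤ 1 := by
      exact_mod_cast Nat.le_of_lt_succ (Nat.mod_lt a two_pos)
    have hb0 : (0 : ℝ) ≤ ((a % 2 : ℕ) : ℝ) := Nat.cast_nonneg _
    have hz : (((a % 2 : ℕ) : ℝ) + y) / 2 ∈ Ico (0 : ℝ) 1 := by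
      constructor <;> linarith [hy.1, hy.2]
    have ha : (a : ℝ) = 2 * ((a / 2 : ℕ) : ℝ) + ((a % 2 : ℕ) : ℝ) := by
      exact_mod_cast (Nat.div_add_mod a 2).symm
    have key : ((a : ℝ) + y) / 2 ^ (j + 1)
        = (((a / 2 : ℕ) : ℝ) + (((a % 2 : ℕ) : ℝ) + y) / 2) / 2 ^ j := by
      rw [ha, pow_succ]
      field_simp
      ring
    rw [key, hc _ hz, walshF_half _ _ hy, Nat.div_div_eq_div_mul, ← pow_succ, mul_assoc]

/-! ### Orthogonality of the Walsh functions on the unit interval -/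

lemma measurable_walshF (m : ℕ) : Measurable (walshF m) := by
  unfold walshF
  refine Finset.measurable_prod _ fun i _ => ?_
  split_ifs
  · exact (measurable_from_top (f := fun z : ℤ => (-1 : ℝ) ^ z)).comp
      (Int.measurable_floor.comp (measurable_id.mul_const _))
  · exact measurable_const

lemma norm_walshF (m : ℕ) (y : ℝ) : ‖walshF m y‖ = 1 := by
  unfold walshF
  rw [norm_prod]
  refine Finset.prod_eq_one fun i _ => ?_
  split_ifs <;> simp

lemma intervalIntegrable_walshF_mul (n m : ℕ) (a b : ℝ) :
    IntervalIntegrable (fun y => walshF n y * walshF m y) volume a b := by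
  refine (intervalIntegrable_const (c := (1 : ℝ))).mono_fun
    ((measurable_walshF n).mul (measurable_walshF m)).aestronglyMeasurable ?_
  exact Filter.Eventually.of_forall fun y => by simp [-Real.norm_eq_abs, norm_walshF]

/-- Interval integrals see only the values on the half-open interval `[a, b)`. -/
lemma integral_congr_Ico {f g : ℝ → ℝ} {a b : ℝ} (hab : a ≤ b) (h : ∀ y ∈ Ico a b, f y = g y) :
    ∫ y in a..b, f y = ∫ y in a..b, g y := by
  rw [intervalIntegral.integral_of_le hab, intervalIntegral.integral_of_le hab,
    ← integral_Ico_eq_integral_Ioc, ← integral_Ico_eq_integral_Ioc]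
  exact setIntegral_congr_fun measurableSet_Ico h

lemma integral_walshF_mul_half (n m : ℕ) :
    ∫ y in (0 : ℝ)..1, walshF n y * walshF m y =
      (1 + (if n.testBit 0 then -1 else 1) * (if m.testBit 0 then -1 else 1)) / 2 *
        ∫ y in (0 : ℝ)..1, walshF (n / 2) y * walshF (m / 2) y := by
  set F : ℝ → ℝ := fun y => walshF n y * walshF m y with hF
  have piece (b : ℕ) : ∫ y in ((b : ℝ) / 2)..((b + 1) / 2), F y =
      (1 / 2) * ((if n.testBit 0 then (-1) ^ b else 1) * (if m.testBit 0 then (-1) ^ b else 1) *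
        ∫ y in (0 : ℝ)..1, walshF (n / 2) y * walshF (m / 2) y) := by
    have h1 : ∫ y in (0 : ℝ)..1, F ((b : ℝ) / 2 + y / 2)
        = 2 * ∫ y in ((b : ℝ) / 2)..((b + 1) / 2), F y := by
      rw [intervalIntegral.integral_comp_add_div F two_ne_zero, smul_eq_mul]
      congr 2 <;> ring
    rw [← intervalIntegral.integral_const_mul, ← integral_congr_Ico (f := fun y =>
      F ((b : ℝ) / 2 + y / 2)) zero_le_one, h1]
    · ring
    · intro y hy
      simp only [hF]
      rw [← add_div, walshF_half n b hy, walshF_half m b hy]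
      ring
  have h0 := piece 0
  have h1 := piece 1
  have hadd := intervalIntegral.integral_add_adjacent_intervals
    (intervalIntegrable_walshF_mul n m 0 (1 / 2)) (intervalIntegrable_walshF_mul n m (1 / 2) 1)
  norm_num at h0 h1 hadd
  simp only [hF] at h0 h1 ⊢
  rw [← hadd, h0, h1]
  simp only [Nat.testBit_zero, decide_eq_true_eq]
  split_ifs <;> ring

lemma integral_walshF_mul {n m : ℕ} (h : n ≠ m) :
    ∫ y in (0 : ℝ)..1, walshF n y * walshF m y = 0 := by
  induction hs : n + m using Nat.strong_induction_on generalizing n m with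
  | _ s ih =>
    rw [integral_walshF_mul_half]
    by_cases hp : n / 2 = m / 2
    · -- Equal halves: the parities differ, so the prefactor is `(1 - 1) / 2`.
      have : n % 2 ≠ m % 2 := by omega
      rcases Nat.mod_two_eq_zero_or_one n with h1 | h1 <;>
        rcases Nat.mod_two_eq_zero_or_one m with h2 | h2 <;>
        simp_all [Nat.testBit_zero]
    · rw [ih (n / 2 + m / 2) (by omega) hp rfl, mul_zero]

/-! ### Nesting of dyadic intervals -/

namespace DyadicInterval

lemma len_pos (I : DyadicInterval) : 0 < I.len := by
  unfold len
  positivity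

lemma lo_nonneg (I : DyadicInterval) : 0 ≤ I.lo := by
  unfold lo
  positivity

lemma lo_mem (I : DyadicInterval) : I.lo ∈ I.toSet :=
  ⟨le_rfl, by linarith [I.len_pos]⟩

lemma len_eq {I J : DyadicInterval} {j : ℕ} (hk : J.k = I.k + j) : J.len = 2 ^ j * I.len := by
  unfold len
  rw [hk, zpow_add₀ two_ne_zero, zpow_natCast, mul_comm]

lemma lo_eq (I : DyadicInterval) : I.lo = I.n * I.len := rfl

/-- If `J` meets `I` and `|J| = 2^j |I|`, then `J` is the `j`-th dyadic ancestor of `I`. -/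
lemma div_eq_of_mem {I J : DyadicInterval} {j : ℕ} (hk : J.k = I.k + j) {x : ℝ}
    (hI : x ∈ I.toSet) (hJ : x ∈ J.toSet) : I.n / 2 ^ j = J.n := by
  obtain ⟨h1, h2⟩ := hI
  obtain ⟨h3, h4⟩ := hJ
  rw [lo_eq] at h1 h2 h3 h4
  rw [len_eq hk] at h3 h4
  have hl := I.len_pos
  have e1 : (J.n * 2 ^ j : ℝ) < I.n + 1 := by
    refine lt_of_mul_lt_mul_right ?_ hl.le
    linarith
  have e2 : (I.n : ℝ) < (J.n + 1) * 2 ^ j := by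
    refine lt_of_mul_lt_mul_right ?_ hl.le
    linarith
  have e1' : J.n * 2 ^ j < I.n + 1 := by exact_mod_cast e1
  have e2' : I.n < (J.n + 1) * 2 ^ j := by exact_mod_cast e2
  exact Nat.div_eq_of_lt_le (by omega) e2'

lemma lo_mem_of_div_eq {I J : DyadicInterval} {j : ℕ} (hk : J.k = I.k + j)
    (h : I.n / 2 ^ j = J.n) : I.lo ∈ J.toSet := by
  have hl := I.len_pos
  have e1 : J.n * 2 ^ j ≤ I.n := by
    rw [← h]
    exact Nat.div_mul_le_self _ _
  have e2 : I.n < (J.n + 1) * 2 ^ j := by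
    rw [← h, mul_comm]
    exact Nat.lt_mul_div_succ _ (by positivity)
  have e1' : (J.n * 2 ^ j : ℝ) ≤ I.n := by exact_mod_cast e1
  have e2' : (I.n : ℝ) < (J.n + 1) * 2 ^ j := by exact_mod_cast e2
  have e3 := mul_le_mul_of_nonneg_right e1' hl.le
  have e4 := mul_lt_mul_of_pos_right e2' hl
  constructor
  · rw [lo_eq, lo_eq, len_eq hk]
    linarith
  · rw [lo_eq, lo_eq, len_eq hk]
    linarith

lemma toSet_subset_of_div_eq {I J : DyadicInterval} {j : ℕ} (hk : J.k = I.k + j)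
    (h : I.n / 2 ^ j = J.n) : I.toSet ⊆ J.toSet := by
  intro x hx
  have hl := I.len_pos
  have e2 : I.n + 1 ≤ (J.n + 1) * 2 ^ j := by
    rw [← h, mul_comm]
    exact Nat.lt_mul_div_succ _ (by positivity)
  have e2' : (I.n + 1 : ℝ) ≤ (J.n + 1) * 2 ^ j := by exact_mod_cast e2
  have e4 := mul_le_mul_of_nonneg_right e2' hl.le
  refine ⟨(lo_mem_of_div_eq hk h).1.trans hx.1, hx.2.trans_le ?_⟩
  rw [lo_eq, lo_eq, len_eq hk]
  linarith

end DyadicInterval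

/-! ### Orthogonality of wave packets -/

/-- Orthogonality when the time interval of `p` is at most as long as that of `p'`. -/
lemma orthogonal_aux (p p' : Tile) (h : Disjoint p.toSet p'.toSet) (hk : p.I.k ≤ p'.I.k) :
    ∫ x in Set.Ici (0 : ℝ), p.wp x * p'.wp x = 0 := by
  by_cases hI : Disjoint p.I.toSet p'.I.toSet
  · have : (fun x => p.wp x * p'.wp x) = fun _ => 0 := by
      funext x
      by_cases hx : x ∈ p.I.toSet
      · simp [Tile.wp, wavePacket, Set.disjoint_left.1 hI hx]
      · simp [Tile.wp, wavePacket, hx]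
    simp [this]
  obtain ⟨x₀, hx, hx'⟩ := Set.not_disjoint_iff.1 hI
  obtain ⟨j, hj⟩ := Int.le.dest hk
  have hIk : p'.I.k = p.I.k + j := hj.symm
  have hωk : p.ω.k = p'.ω.k + j := by
    have := p.area
    have := p'.area
    omega
  have hn := DyadicInterval.div_eq_of_mem hIk hx hx'
  have hne : p.ω.n ≠ p'.ω.n / 2 ^ j := by
    intro he
    refine Set.disjoint_left.1 h (show (p.I.lo, p'.ω.lo) ∈ p.toSet from ⟨p.I.lo_mem, ?_⟩)
      ⟨?_, p'.ω.lo_mem⟩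
    · exact DyadicInterval.lo_mem_of_div_eq hωk he.symm
    · exact DyadicInterval.lo_mem_of_div_eq hIk hn
  have hsub := DyadicInterval.toSet_subset_of_div_eq hIk hn
  obtain ⟨c, hc⟩ := walshF_restrict_s3 j p'.ω.n (p.I.n % 2 ^ j)
  have hl := p.I.len_pos
  set C : ℝ := p.I.len ^ (-(1 : ℝ) / 2) * p'.I.len ^ (-(1 : ℝ) / 2) * c with hC
  set G : ℝ → ℝ := fun y => walshF p.ω.n y * walshF (p'.ω.n / 2 ^ j) y with hG
  have hpt : (fun x => p.wp x * p'.wp x)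
      = p.I.toSet.indicator fun x => C * G ((x - p.I.lo) / p.I.len) := by
    funext x
    by_cases hx : x ∈ p.I.toSet
    · have hy : (x - p.I.lo) / p.I.len ∈ Ico (0 : ℝ) 1 := by
        refine ⟨div_nonneg (by linarith [hx.1]) hl.le, ?_⟩
        rw [div_lt_one hl]
        linarith [hx.2]
      -- The offset of `p.I` inside `p'.I`, in units of `|p.I|`, is `p.I.n % 2 ^ j`.
      have hcoord : (x - p'.I.lo) / p'.I.len
          = (((p.I.n % 2 ^ j : ℕ) : ℝ) + (x - p.I.lo) / p.I.len) / 2 ^ j := by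
        have hdm : (p.I.n : ℝ) = 2 ^ j * p'.I.n + ((p.I.n % 2 ^ j : ℕ) : ℝ) := by
          rw [← hn]
          exact_mod_cast (Nat.div_add_mod p.I.n (2 ^ j)).symm
        rw [p'.I.lo_eq, p.I.lo_eq, DyadicInterval.len_eq hIk, hdm]
        field_simp
        ring
      simp only [Tile.wp, wavePacket, Set.indicator_of_mem hx, Set.indicator_of_mem (hsub hx)]
      rw [hcoord, hc _ hy, hC, hG]
      ring
    · simp [Tile.wp, wavePacket, hx]
  have hset : Set.Ici (0 : ℝ) ∩ p.I.toSet = p.I.toSet :=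
    Set.inter_eq_right.2 fun x hx => p.I.lo_nonneg.trans hx.1
  rw [hpt, setIntegral_indicator (show MeasurableSet p.I.toSet from measurableSet_Ico), hset,
    DyadicInterval.toSet,
    integral_Ico_eq_integral_Ioc, ← intervalIntegral.integral_of_le (by linarith),
    intervalIntegral.integral_const_mul]
  have hsubst : ∫ x in p.I.lo..(p.I.lo + p.I.len), G ((x - p.I.lo) / p.I.len)
      = p.I.len * ∫ y in (0 : ℝ)..1, G y := by
    rw [intervalIntegral.integral_comp_sub_right (fun x => G (x / p.I.len)),
      intervalIntegral.integral_comp_div G hl.ne']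
    simp [hl.ne']
  rw [hsubst, integral_walshF_mul hne]
  simp

/-- Wave packets of disjoint tiles are orthogonal: if `p ∩ p' = ∅` then
`∫_0^∞ φ_p φ_{p'} = 0`. -/
theorem wavePacket_orthogonal_of_disjoint (p p' : Tile) (h : Disjoint p.toSet p'.toSet) :
    ∫ x in Set.Ici (0 : ℝ), p.wp x * p'.wp x = 0 := by
  rcases le_total p.I.k p'.I.k with hk | hk
  · exact orthogonal_aux p p' h hk
  · simpa only [mul_comm] using orthogonal_aux p' p h.symm hk
end

section
/- If (T, ξ_T, I_T) is an i-lacunary tree for some i ∈ {1,2,3,4}, then the tiles {P_i : P ∈ T} are pairwise disjoint: for any two distinct quartiles P, P' ∈ T one has P_i ∩ P'_i = ∅. -/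
/-!
Two dyadic intervals that meet are nested, and the index of the larger one is the index of the
smaller one divided by a power of two (`DyadicInterval.index_div_of_mem`).

Suppose `P_i` and `P'_i` share a point `(x, η)`, with `|ω_P| ≤ |ω_{P'}|` and
`|ω_{P'}| = 2^d |ω_P|`. Writing `n`, `n'` for the indices of `ω_P`, `ω_{P'}`, the point `η` gives
`⌊(4n + i) / 2^d⌋ = 4n' + i`, and the point `ξ_T` gives `⌊(4n + j) / 2^d⌋ = 4n' + j`, where
`j ≠ i`. For `d ≥ 2` both left sides equal `⌊n / 2^(d-2)⌋`, so `i = j`. For `d = 1` one gets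
`i - ⌊i/2⌋ = j - ⌊j/2⌋ = 2n - 4n'`; two different values in `{0,1,2,3}` agree under `t ↦ t - ⌊t/2⌋`
only for the pair `{1, 2}`, with the odd common value `1`, which is impossible. So `d = 0` and
`n = n'`; then `I_P` and `I_{P'}` have the same length and share `x`, which forces `P = P'`.
-/


open MeasureTheory Set
open scoped ENNReal

/-- If a point lies in dyadic intervals of scales `k` and `k + d`, then the index of the larger
one is the integer quotient of the index of the smaller one by `2 ^ d`. -/
theorem DyadicInterval.index_div_of_mem {A B : DyadicInterval} {x : ℝ} (d : ℕ)
    (hk : B.k = A.k + d) (hA : x ∈ A.toSet) (hB : x ∈ B.toSet) : A.n / 2 ^ d = B.n := by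
  simp only [DyadicInterval.toSet, DyadicInterval.lo, DyadicInterval.len, Set.mem_Ico] at hA hB
  rw [hk, zpow_add₀ (two_ne_zero), zpow_natCast] at hB
  have hpos : (0 : ℝ) < 2 ^ A.k := by positivity
  have h1 : ((B.n * 2 ^ d : ℕ) : ℝ) < ((A.n + 1 : ℕ) : ℝ) := by
    push_cast
    refine lt_of_mul_lt_mul_right (a := (2 : ℝ) ^ A.k) ?_ hpos.le
    linarith [hA.2, hB.1]
  have h2 : ((A.n : ℕ) : ℝ) < (((B.n + 1) * 2 ^ d : ℕ) : ℝ) := by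
    push_cast
    refine lt_of_mul_lt_mul_right (a := (2 : ℝ) ^ A.k) ?_ hpos.le
    linarith [hA.1, hB.2]
  exact Nat.div_eq_of_lt_le (Nat.lt_succ_iff.mp (by exact_mod_cast h1)) (by exact_mod_cast h2)

/-- The arithmetic core: the scales of two frequency intervals are equal as soon as both the
`i`-th and the `j`-th grandchildren are nested. -/
theorem eq_zero_of_div_eq {i j : ℕ} (hi : i < 4) (hj : j < 4) (hij : j ≠ i) {n n' d : ℕ}
    (h1 : (4 * n + i) / 2 ^ d = 4 * n' + i) (h2 : (4 * n + j) / 2 ^ d = 4 * n' + j) : d = 0 := by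
  match d with
  | 0 => rfl
  | 1 => omega
  | e + 2 =>
    rw [show 2 ^ (e + 2) = 4 * 2 ^ e by ring, ← Nat.div_div_eq_div_mul] at h1 h2
    rw [show (4 * n + i) / 4 = n by omega] at h1
    rw [show (4 * n + j) / 4 = n by omega] at h2
    omega

/-- Two quartiles whose `j`-th frequency intervals meet and whose `i`-th tiles meet, `i ≠ j`,
coincide; the order of scales is assumed without loss of generality. -/
theorem Quartile.eq_of_meet {i j : Fin 4} (hij : j ≠ i) {P P' : Quartile} {ξ : ℝ} {z : ℝ × ℝ}
    (hle : P.ω.k ≤ P'.ω.k) (hξ : ξ ∈ (P.freq j).toSet) (hξ' : ξ ∈ (P'.freq j).toSet)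
    (hz : z ∈ P.subtileSet i) (hz' : z ∈ P'.subtileSet i) : P = P' := by
  obtain ⟨d, hd⟩ := Int.le.dest hle
  have h1 : (4 * P.ω.n + i.val) / 2 ^ d = 4 * P'.ω.n + i.val :=
    DyadicInterval.index_div_of_mem (A := P.freq i) (B := P'.freq i) d
      (by simp only [Quartile.freq]; omega) hz.2 hz'.2
  have h2 : (4 * P.ω.n + j.val) / 2 ^ d = 4 * P'.ω.n + j.val :=
    DyadicInterval.index_div_of_mem (A := P.freq j) (B := P'.freq j) d
      (by simp only [Quartile.freq]; omega) hξ hξ'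
  have hd0 : d = 0 := eq_zero_of_div_eq i.isLt j.isLt (fun h => hij (Fin.ext h)) h1 h2
  subst hd0
  have hIk : P'.I.k = P.I.k + (0 : ℕ) := by
    have := P.area
    have := P'.area
    omega
  have hI := DyadicInterval.index_div_of_mem 0 hIk hz.1 hz'.1
  obtain ⟨⟨a, b⟩, ⟨c, e⟩, _⟩ := P
  obtain ⟨⟨a', b'⟩, ⟨c', e'⟩, _⟩ := P'
  simp only [pow_zero, Nat.div_one] at *
  obtain rfl : a = a' := hI
  obtain rfl : b = b' := by omega
  obtain rfl : c = c' := by omega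
  obtain rfl : e = e' := by omega
  rfl

/-- In an `i`-lacunary tree, the tiles `{P_i : P ∈ T}` are pairwise disjoint. -/
theorem lacunary_tree_tiles_disjoint
    (i : Fin 4) (T : Finset Quartile) (ξ : ℝ) (It : DyadicInterval)
    (hT : IsLacunary i T ξ It) :
    ∀ P ∈ T, ∀ P' ∈ T, P ≠ P' → Disjoint (P.subtileSet i) (P'.subtileSet i) := by
  obtain ⟨j, hij, -, hov⟩ := hT
  intro P hP P' hP' hne
  refine Set.disjoint_left.mpr fun z hz hz' => hne ?_
  rcases le_total P.ω.k P'.ω.k with h | h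
  · exact Quartile.eq_of_meet hij h (hov P hP) (hov P' hP') hz hz'
  · exact (Quartile.eq_of_meet hij h (hov P' hP') (hov P hP) hz' hz).symm
end

section
/- (John–Nirenberg type lemma.) There is an absolute constant C such that the following holds. Let 𝐏 be a collection of quartiles, i ∈ {1,2,3,4}, and {c(P)}_{P ∈ 𝐏} real coefficients. Set A_{1,∞} = sup over all i-lacunary trees T ⊆ 𝐏 of |I_T|^{-1} ‖ (∑_{P∈T} |c(P)|² 1_{I_P}/|I_P|)^{1/2} ‖_{L^{1,∞}}, and A_2 = sup over all i-lacunary trees T ⊆ 𝐏 of |I_T|^{-1/2} ‖ (∑_{P∈T} |c(P)|² 1_{I_P}/|I_P|)^{1/2} ‖_{L²}. Then A_2 ≤ C A_{1,∞}. -/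
/-!
The estimate is proved by a stopping-time (good-λ) argument.  For a finite family `S` of quartiles
write `F_S = ∑_{P ∈ S} c(P)² 1_{I_P}/|I_P|`, so that `∫ F_S = ∑_{P ∈ S} c(P)²`.  If `b > 0` bounds
the weak-type supremum, then every lacunary tree `S` with top `J` satisfies
`|{F_S > 4b²}| ≤ |J|/2`.

Call `P ∈ S` *bad* if `∑_{Q ∈ S, I_P ⊆ I_Q} c(Q)²/|I_Q| > 4b²`.  The good quartiles contribute at
most `4b²` to `F_S` at every point, because those containing a given point are nested.  The maximal
bad intervals are disjoint and lie in `{F_S > 4b²}`, so their total length is at most `|J|/2`.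
Hence, if every subtree `{P ∈ S : I_P ⊆ I_Q}` has mass at most `K |I_Q|`, then `S` has mass at most
`(4b² + K/2)|J|` (`carleson_step`).  Taking for `K` the largest normalized mass of a subtree, which
is attained as the tree is finite, gives `K ≤ 4b² + K/2`, that is `K ≤ 8b²` (`tree_mass_le`).
-/

open MeasureTheory Set
open scoped ENNReal

/-- The weak-`L¹` quasinorm `‖g‖_{L^{1,∞}} = sup_{t>0} t |{x : |g(x)| > t}|`. -/
noncomputable def weakL1 (g : ℝ → ℝ) : ℝ≥0∞ :=
  ⨆ (t : ℝ) (_ : 0 < t), ENNReal.ofReal t * volume {x : ℝ | t < |g x|}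

/-! ### Dyadic intervals -/

namespace DyadicInterval

lemma measurableSet_toSet (I : DyadicInterval) : MeasurableSet I.toSet := measurableSet_Ico

lemma volume_toSet (I : DyadicInterval) : volume I.toSet = ENNReal.ofReal I.len := by
  simp [toSet]

lemma subset_of_mem {I J : DyadicInterval} {x : ℝ} (hI : x ∈ I.toSet) (hJ : x ∈ J.toSet)
    (hk : I.k ≤ J.k) : I.toSet ⊆ J.toSet := by
  obtain ⟨m, hm⟩ := Int.le.dest hk
  have h2 : (0 : ℝ) < 2 ^ I.k := by positivity
  have hJk : (2 : ℝ) ^ J.k = 2 ^ I.k * 2 ^ m := by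
    rw [← hm, zpow_add₀ (by norm_num), zpow_natCast]
  simp only [toSet, lo, len, Set.mem_Ico, hJk] at hI hJ
  -- Comparison of the endpoints of `I` and `J` in units of `|I|`.
  have h3 : (I.n : ℝ) < (J.n + 1) * 2 ^ m := by
    by_contra! h
    nlinarith [mul_le_mul_of_nonneg_left h h2.le]
  have h4 : (J.n : ℝ) * 2 ^ m < I.n + 1 := by
    by_contra! h
    nlinarith [mul_le_mul_of_nonneg_left h h2.le]
  have h3' : I.n + 1 ≤ (J.n + 1) * 2 ^ m := by
    have : I.n < (J.n + 1) * 2 ^ m := by exact_mod_cast h3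
    omega
  have h4' : J.n * 2 ^ m ≤ I.n := by
    have : J.n * 2 ^ m < I.n + 1 := by exact_mod_cast h4
    omega
  have h3r : (I.n : ℝ) + 1 ≤ (J.n + 1) * 2 ^ m := by exact_mod_cast h3'
  have h4r : (J.n : ℝ) * 2 ^ m ≤ I.n := by exact_mod_cast h4'
  simp only [toSet, lo, len, hJk]
  apply Set.Ico_subset_Ico
  · nlinarith [mul_le_mul_of_nonneg_left h4r h2.le]
  · nlinarith [mul_le_mul_of_nonneg_left h3r h2.le]

lemma eq_of_mem {I J : DyadicInterval} {x : ℝ} (hI : x ∈ I.toSet) (hJ : x ∈ J.toSet)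
    (hk : I.k = J.k) : I = J := by
  have h2 : (0 : ℝ) < 2 ^ I.k := by positivity
  simp only [toSet, lo, len, Set.mem_Ico, ← hk] at hI hJ
  have h3 : (I.n : ℝ) < J.n + 1 := by
    by_contra! h
    nlinarith [mul_le_mul_of_nonneg_left h h2.le]
  have h4 : (J.n : ℝ) < I.n + 1 := by
    by_contra! h
    nlinarith [mul_le_mul_of_nonneg_left h h2.le]
  have h3' : I.n < J.n + 1 := by exact_mod_cast h3
  have h4' : J.n < I.n + 1 := by exact_mod_cast h4
  cases I; cases J
  simp only [mk.injEq] at *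
  exact ⟨by omega, hk⟩

end DyadicInterval

/-! ### The square of the square function -/

/-- The function `∑_{P ∈ S} a(P) 1_{I_P}/|I_P|`, i.e. the square of the square function when
`a = c²`. -/
noncomputable def sqF (S : Finset Quartile) (a : Quartile → ℝ) (x : ℝ) : ℝ :=
  ∑ P ∈ S, a P * P.I.toSet.indicator (fun _ => (1 : ℝ)) x / P.I.len

lemma sqF_nonneg (S : Finset Quartile) {a : Quartile → ℝ} (ha : ∀ P, 0 ≤ a P) (x : ℝ) :
    0 ≤ sqF S a x := by
  refine Finset.sum_nonneg fun P _ => div_nonneg (mul_nonneg (ha P) ?_) P.I.len_pos.le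
  exact Set.indicator_nonneg (fun _ _ => zero_le_one) x

lemma integrable_indicator_toSet (I : DyadicInterval) (r : ℝ) :
    Integrable (I.toSet.indicator (fun _ => r)) := by
  refine (integrable_indicator_iff I.measurableSet_toSet).2 (integrableOn_const ?_)
  rw [I.volume_toSet]
  exact ENNReal.ofReal_ne_top

lemma integral_indicator_toSet (I : DyadicInterval) (r : ℝ) :
    ∫ x, I.toSet.indicator (fun _ => r) x = I.len * r := by
  rw [integral_indicator_const _ I.measurableSet_toSet, measureReal_def, I.volume_toSet,
    ENNReal.toReal_ofReal I.len_pos.le, smul_eq_mul]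

lemma integrable_sqF (S : Finset Quartile) (a : Quartile → ℝ) : Integrable (sqF S a) := by
  unfold sqF
  exact integrable_finsetSum _ fun P _ =>
    ((integrable_indicator_toSet P.I 1).const_mul _).div_const _

lemma integral_sqF (S : Finset Quartile) (a : Quartile → ℝ) :
    ∫ x, sqF S a x = ∑ P ∈ S, a P := by
  unfold sqF
  rw [integral_finsetSum _ fun P _ =>
    ((integrable_indicator_toSet P.I 1).const_mul _).div_const _]
  refine Finset.sum_congr rfl fun P _ => ?_
  rw [integral_div, integral_const_mul, integral_indicator_toSet, mul_one,
    mul_div_assoc, div_self P.I.len_pos.ne', mul_one]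

/-! ### The stopping-time argument -/

open Classical in
/-- The value on `I_P` of the part of `sqF S a` coming from intervals containing `I_P`. -/
noncomputable def tower (S : Finset Quartile) (a : Quartile → ℝ) (P : Quartile) : ℝ :=
  ∑ Q ∈ S with P.I.toSet ⊆ Q.I.toSet, a Q / Q.I.len

lemma tower_le_sqF (S : Finset Quartile) {a : Quartile → ℝ} (ha : ∀ P, 0 ≤ a P) {P : Quartile}
    {x : ℝ} (hx : x ∈ P.I.toSet) : tower S a P ≤ sqF S a x := by
  classical
  unfold tower sqF
  rw [Finset.sum_filter]
  refine Finset.sum_le_sum fun Q _ => ?_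
  split_ifs with h
  · rw [Set.indicator_of_mem (h hx), mul_one]
  · exact div_nonneg (mul_nonneg (ha Q) (Set.indicator_nonneg (fun _ _ => zero_le_one) x))
      Q.I.len_pos.le

/-- A subfamily on which `tower` is at most `L` has mass at most `L |J|`: at each point, the
intervals of the subfamily containing it all contain the shortest of them. -/
lemma good_mass_le (S G : Finset Quartile) (hGS : G ⊆ S) {a : Quartile → ℝ} (ha : ∀ P, 0 ≤ a P)
    (J : DyadicInterval) (hG : ∀ P ∈ G, P.I.toSet ⊆ J.toSet) {L : ℝ} (hL : 0 ≤ L)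
    (hgood : ∀ P ∈ G, tower S a P ≤ L) : ∑ P ∈ G, a P ≤ J.len * L := by
  classical
  rw [← integral_sqF G a, ← integral_indicator_toSet J L]
  refine integral_mono (integrable_sqF G a) (integrable_indicator_toSet J L) fun x => ?_
  have hterm : sqF G a x = ∑ Q ∈ G with x ∈ Q.I.toSet, a Q / Q.I.len := by
    unfold sqF
    rw [Finset.sum_filter]
    refine Finset.sum_congr rfl fun Q _ => ?_
    by_cases h : x ∈ Q.I.toSet <;> simp [h]
  rw [hterm]
  rcases (G.filter fun Q => x ∈ Q.I.toSet).eq_empty_or_nonempty with he | hne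
  · rw [he, Finset.sum_empty]
    exact Set.indicator_nonneg (fun _ _ => hL) x
  obtain ⟨P, hP, hmin⟩ := Finset.exists_min_image _ (fun Q : Quartile => Q.I.k) hne
  rw [Finset.mem_filter] at hP
  rw [Set.indicator_of_mem (hG P hP.1 hP.2)]
  refine le_trans ?_ (hgood P hP.1)
  unfold tower
  refine Finset.sum_le_sum_of_subset_of_nonneg (fun Q hQ => ?_)
    fun Q _ _ => div_nonneg (ha Q) Q.I.len_pos.le
  have hk := hmin Q hQ
  rw [Finset.mem_filter] at hQ ⊢
  exact ⟨hGS hQ.1, DyadicInterval.subset_of_mem hP.2 hQ.2 hk⟩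

open Classical in
/-- One stopping-time iteration: a bound `K` for the normalized masses of all subtrees improves to
`L + K/2` for the whole family when `{sqF S a > L}` fills at most half of the top interval. -/
lemma carleson_step (S : Finset Quartile) {a : Quartile → ℝ} (ha : ∀ P, 0 ≤ a P)
    (J : DyadicInterval) (hS : ∀ P ∈ S, P.I.toSet ⊆ J.toSet) {L : ℝ} (hL : 0 ≤ L)
    (hweak : volume {x | L < sqF S a x} ≤ ENNReal.ofReal (J.len / 2)) {K : ℝ} (hK0 : 0 ≤ K)
    (hK : ∀ Q ∈ S, ∑ P ∈ S with P.I.toSet ⊆ Q.I.toSet, a P ≤ Q.I.len * K) :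
    ∑ P ∈ S, a P ≤ J.len * (L + K / 2) := by
  have hgood : ∑ P ∈ S with tower S a P ≤ L, a P ≤ J.len * L :=
    good_mass_le S _ (Finset.filter_subset _ _) ha J
      (fun P hP => hS P (Finset.mem_filter.1 hP).1) hL fun P hP => (Finset.mem_filter.1 hP).2
  -- `B` collects the bad intervals and `M` the maximal ones among them.
  set B : Finset DyadicInterval :=
    (S.filter fun P => ¬ tower S a P ≤ L).image Quartile.I with hB
  set M : Finset DyadicInterval :=
    B.filter fun I => ∀ I' ∈ B, I.toSet ⊆ I'.toSet → I'.k ≤ I.k with hM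
  have hBmem : ∀ I ∈ B, ∃ P ∈ S, L < tower S a P ∧ P.I = I := by
    intro I hI
    obtain ⟨P, hP, rfl⟩ := Finset.mem_image.1 hI
    rw [Finset.mem_filter, not_le] at hP
    exact ⟨P, hP.1, hP.2, rfl⟩
  have hdisj : (M : Set DyadicInterval).PairwiseDisjoint DyadicInterval.toSet := by
    intro I hI I' hI' hne
    refine Set.disjoint_left.2 fun x hx hx' => hne ?_
    rw [Finset.mem_coe, hM, Finset.mem_filter] at hI hI'
    rcases le_total I.k I'.k with h | h
    · exact DyadicInterval.eq_of_mem hx hx' (le_antisymm h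
        (hI.2 I' hI'.1 (DyadicInterval.subset_of_mem hx hx' h)))
    · exact DyadicInterval.eq_of_mem hx hx' (le_antisymm
        (hI'.2 I hI.1 (DyadicInterval.subset_of_mem hx' hx h)) h)
  have hlen : ∑ I ∈ M, I.len ≤ J.len / 2 := by
    have hsub : (⋃ I ∈ M, I.toSet) ⊆ {x | L < sqF S a x} := by
      intro x hx
      obtain ⟨I, hI, hxI⟩ := Set.mem_iUnion₂.1 hx
      obtain ⟨P, -, hPL, rfl⟩ := hBmem I (Finset.mem_filter.1 hI).1
      exact hPL.trans_le (tower_le_sqF S ha hxI)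
    have h1 := (measure_mono hsub).trans hweak
    rw [measure_biUnion_finset hdisj fun I _ => I.measurableSet_toSet] at h1
    simp only [DyadicInterval.volume_toSet] at h1
    rw [← ENNReal.ofReal_sum_of_nonneg fun I _ => I.len_pos.le] at h1
    exact (ENNReal.ofReal_le_ofReal_iff (by linarith [J.len_pos])).1 h1
  have hcover : S.filter (fun P => ¬ tower S a P ≤ L) ⊆
      M.biUnion fun I => S.filter fun P => P.I.toSet ⊆ I.toSet := by
    intro P hP
    have hPB : P.I ∈ B.filter fun I => P.I.toSet ⊆ I.toSet :=
      Finset.mem_filter.2 ⟨Finset.mem_image_of_mem _ hP, subset_rfl⟩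
    obtain ⟨I, hI, hmax⟩ := Finset.exists_max_image _ (fun I : DyadicInterval => I.k) ⟨_, hPB⟩
    rw [Finset.mem_filter] at hI
    refine Finset.mem_biUnion.2 ⟨I, Finset.mem_filter.2 ⟨hI.1, fun I' hI' hsub => ?_⟩,
      Finset.mem_filter.2 ⟨(Finset.mem_filter.1 hP).1, hI.2⟩⟩
    exact hmax I' (Finset.mem_filter.2 ⟨hI', hI.2.trans hsub⟩)
  have hbad : ∑ P ∈ S with ¬ tower S a P ≤ L, a P ≤ J.len / 2 * K :=
    calc ∑ P ∈ S with ¬ tower S a P ≤ L, a P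
        ≤ ∑ P ∈ M.biUnion (fun I => S.filter fun P => P.I.toSet ⊆ I.toSet), a P :=
          Finset.sum_le_sum_of_subset_of_nonneg hcover fun P _ _ => ha P
      _ ≤ ∑ I ∈ M, ∑ P ∈ S with P.I.toSet ⊆ I.toSet, a P := by
          -- A quartile lies under only one maximal interval, by disjointness.
          refine le_of_eq (Finset.sum_biUnion fun I hI I' hI' hne => ?_)
          refine Finset.disjoint_left.2 fun P hP hP' => ?_
          have hlo : P.I.lo ∈ P.I.toSet := ⟨le_rfl, by linarith [P.I.len_pos]⟩
          exact Set.disjoint_left.1 (hdisj hI hI' hne) ((Finset.mem_filter.1 hP).2 hlo)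
            ((Finset.mem_filter.1 hP').2 hlo)
      _ ≤ ∑ I ∈ M, I.len * K := by
          refine Finset.sum_le_sum fun I hI => ?_
          obtain ⟨P, hPS, -, rfl⟩ := hBmem I (Finset.mem_filter.1 hI).1
          exact hK P hPS
      _ = (∑ I ∈ M, I.len) * K := by rw [Finset.sum_mul]
      _ ≤ J.len / 2 * K := mul_le_mul_of_nonneg_right hlen hK0
  rw [← Finset.sum_filter_add_sum_filter_not S (fun P => tower S a P ≤ L)]
  linarith

open Classical in
/-- If the weak-type bound holds for all subtrees, the iteration of `carleson_step` closes up at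
the maximal normalized mass, giving the bound `2L`. -/
lemma tree_mass_le (T : Finset Quartile) {a : Quartile → ℝ} (ha : ∀ P, 0 ≤ a P)
    (It : DyadicInterval) (hT : ∀ P ∈ T, P.I.toSet ⊆ It.toSet) {L : ℝ} (hL : 0 ≤ L)
    (hweak : ∀ J : DyadicInterval,
      volume {x | L < sqF (T.filter fun P => P.I.toSet ⊆ J.toSet) a x}
        ≤ ENNReal.ofReal (J.len / 2)) :
    ∑ P ∈ T, a P ≤ It.len * (2 * L) := by
  set mass : DyadicInterval → ℝ := fun J => ∑ P ∈ T with P.I.toSet ⊆ J.toSet, a P with hmass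
  obtain ⟨J, -, hmax⟩ := Finset.exists_max_image (insert It (T.image Quartile.I))
    (fun J => mass J / J.len) ⟨It, Finset.mem_insert_self _ _⟩
  have hm0 : 0 ≤ mass J := Finset.sum_nonneg fun P _ => ha P
  have hstep : mass J ≤ J.len * (L + mass J / J.len / 2) := by
    refine carleson_step _ ha J (fun P hP => (Finset.mem_filter.1 hP).2) hL (hweak J)
      (div_nonneg hm0 J.len_pos.le) fun Q hQ => ?_
    rw [Finset.mem_filter] at hQ
    have h1 := hmax Q.I (Finset.mem_insert_of_mem (Finset.mem_image_of_mem _ hQ.1))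
    rw [div_le_iff₀ Q.I.len_pos] at h1
    rw [mul_comm]
    refine le_trans (Finset.sum_le_sum_of_subset_of_nonneg ?_ fun P _ _ => ha P) h1
    intro P hP
    rw [Finset.mem_filter, Finset.mem_filter] at hP
    exact Finset.mem_filter.2 ⟨hP.1.1, hP.2⟩
  have hK : mass J / J.len ≤ 2 * L := by
    rw [mul_comm, ← div_le_iff₀ J.len_pos] at hstep
    linarith
  have hIt := (hmax It (Finset.mem_insert_self _ _)).trans hK
  rw [div_le_iff₀ It.len_pos] at hIt
  have hall : mass It = ∑ P ∈ T, a P := by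
    simp only [hmass]
    rw [Finset.filter_true_of_mem hT]
  rw [← hall, mul_comm]
  exact hIt

/-! ### Passage to the suprema -/

lemma IsLacunary.filter {i : Fin 4} {T S : Finset Quartile} {ξ : ℝ} {It J : DyadicInterval}
    (h : IsLacunary i T ξ It) (hST : S ⊆ T) (hS : ∀ P ∈ S, P.I.toSet ⊆ J.toSet) :
    IsLacunary i S ξ J := by
  obtain ⟨j, hj, ⟨h0, h1⟩, h2⟩ := h
  exact ⟨j, hj, ⟨h0, fun P hP => ⟨hS P hP, (h1 P (hST hP)).2⟩⟩, fun P hP => h2 P (hST hP)⟩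

/-- Chebyshev form of the weak-type bound at height `2b`, in terms of the squared function. -/
lemma volume_le_of_weakL1 {g : ℝ → ℝ} (J : DyadicInterval) {b : ℝ} (hb : 0 < b)
    (h : (ENNReal.ofReal J.len)⁻¹ * weakL1 (fun x => Real.sqrt (g x)) ≤ ENNReal.ofReal b) :
    volume {x | 4 * b ^ 2 < g x} ≤ ENNReal.ofReal (J.len / 2) := by
  have hset : {x | 4 * b ^ 2 < g x} = {x | 2 * b < |Real.sqrt (g x)|} := by
    ext x
    rw [Set.mem_ofPred_eq, Set.mem_ofPred_eq, abs_of_nonneg (Real.sqrt_nonneg _),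
      Real.lt_sqrt (by positivity), mul_pow]
    norm_num
  have h1 : ENNReal.ofReal (2 * b) * volume {x | 2 * b < |Real.sqrt (g x)|}
      ≤ weakL1 (fun x => Real.sqrt (g x)) :=
    le_iSup₂ (f := fun (t : ℝ) (_ : 0 < t) =>
      ENNReal.ofReal t * volume {x : ℝ | t < |Real.sqrt (g x)|}) (2 * b) (by positivity)
  have h2 : weakL1 (fun x => Real.sqrt (g x)) ≤ ENNReal.ofReal J.len * ENNReal.ofReal b := by
    rw [mul_comm, ← div_eq_mul_inv] at h
    rw [mul_comm]
    exact (ENNReal.div_le_iff (by simpa using J.len_pos) ENNReal.ofReal_ne_top).1 h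
  have h3 := h1.trans h2
  rw [hset]
  rw [← ENNReal.ofReal_mul J.len_pos.le, mul_comm,
    ← ENNReal.le_div_iff_mul_le (Or.inl (by simpa using hb)) (Or.inl ENNReal.ofReal_ne_top),
    ← ENNReal.ofReal_div_of_pos (by positivity)] at h3
  refine h3.trans (le_of_eq ?_)
  congr 1
  field_simp

lemma lintegral_sqrt_sqF (T : Finset Quartile) {a : Quartile → ℝ} (ha : ∀ P, 0 ≤ a P) :
    ∫⁻ x, ENNReal.ofReal (Real.sqrt (sqF T a x)) ^ (2 : ℝ) = ENNReal.ofReal (∑ P ∈ T, a P) := by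
  rw [← integral_sqF T a, ofReal_integral_eq_lintegral_ofReal (integrable_sqF T a)
    (Filter.Eventually.of_forall fun x => sqF_nonneg T ha x)]
  refine lintegral_congr fun x => ?_
  rw [ENNReal.ofReal_rpow_of_nonneg (Real.sqrt_nonneg _) (by norm_num), Real.rpow_two,
    Real.sq_sqrt (sqF_nonneg T ha x)]

/-- **Lemma 3.4 (John–Nirenberg type).** There is an absolute constant `C` such that, for any
collection of quartiles `Ps`, any `i`, and any coefficients `c`,
`A_2 ≤ C A_{1,∞}`, where the two quantities are the suprema over `i`-lacunary trees `T ⊆ Ps` of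
`|I_T|^{-1/2} ‖(∑_{P∈T} |c(P)|² 1_{I_P}/|I_P|)^{1/2}‖_{L²}` and
`|I_T|^{-1} ‖(∑_{P∈T} |c(P)|² 1_{I_P}/|I_P|)^{1/2}‖_{L^{1,∞}}` respectively. -/
theorem john_nirenberg_type :
    ∃ C : ℝ≥0∞, C ≠ ⊤ ∧
      ∀ (Ps : Set Quartile) (i : Fin 4) (c : Quartile → ℝ),
      (⨆ (T : Finset Quartile) (ξ : ℝ) (It : DyadicInterval)
          (_ : IsLacunary i T ξ It) (_ : (T : Set Quartile) ⊆ Ps),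
          (ENNReal.ofReal It.len) ^ (-(1 : ℝ) / 2) *
            (∫⁻ x, ENNReal.ofReal
                (Real.sqrt (∑ P ∈ T, c P ^ 2 * P.I.toSet.indicator (fun _ => (1 : ℝ)) x / P.I.len))
              ^ (2 : ℝ)) ^ ((1 : ℝ) / 2))
        ≤ C *
          ⨆ (T : Finset Quartile) (ξ : ℝ) (It : DyadicInterval)
            (_ : IsLacunary i T ξ It) (_ : (T : Set Quartile) ⊆ Ps),
            (ENNReal.ofReal It.len)⁻¹ *
              weakL1 (fun x =>
                Real.sqrt (∑ P ∈ T, c P ^ 2 * P.I.toSet.indicator (fun _ => (1 : ℝ)) x / P.I.len)) := by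
  refine ⟨3, by norm_num, fun Ps i c => ?_⟩
  set A := ⨆ (T : Finset Quartile) (ξ : ℝ) (It : DyadicInterval)
            (_ : IsLacunary i T ξ It) (_ : (T : Set Quartile) ⊆ Ps),
            (ENNReal.ofReal It.len)⁻¹ *
              weakL1 (fun x =>
                Real.sqrt (∑ P ∈ T, c P ^ 2 * P.I.toSet.indicator (fun _ => (1 : ℝ)) x / P.I.len))
    with hA
  have ha : ∀ P, 0 ≤ c P ^ 2 := fun P => sq_nonneg _
  rcases eq_or_ne A ⊤ with htop | htop
  · rw [htop, ENNReal.mul_top (by norm_num)]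
    exact le_top
  refine iSup_le fun T => iSup_le fun ξ => iSup_le fun It => iSup_le fun hT => iSup_le fun hTP => ?_
  have hsub : ∀ P ∈ T, P.I.toSet ⊆ It.toSet := by
    obtain ⟨j, -, ⟨-, h1⟩, -⟩ := hT
    exact fun P hP => (h1 P hP).1
  have key : ∀ b : ℝ, 0 < b → A ≤ ENNReal.ofReal b →
      ∑ P ∈ T, c P ^ 2 ≤ It.len * (2 * (4 * b ^ 2)) := by
    classical
    intro b hb hAb
    refine tree_mass_le T ha It hsub (by positivity) fun J => ?_
    refine volume_le_of_weakL1 J hb (le_trans ?_ hAb)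
    set S := T.filter fun P => P.I.toSet ⊆ J.toSet
    have hST : S ⊆ T := Finset.filter_subset _ _
    have hlac : IsLacunary i S ξ J := hT.filter hST fun P hP => (Finset.mem_filter.1 hP).2
    have hSP : (S : Set Quartile) ⊆ Ps := fun P hP => hTP (hST hP)
    rw [hA]
    exact le_iSup_of_le S <| le_iSup_of_le ξ <| le_iSup_of_le J <| le_iSup_of_le hlac <|
      le_iSup_of_le hSP le_rfl
  have hint := lintegral_sqrt_sqF T ha
  simp only [sqF] at hint
  rw [hint]
  refine ENNReal.le_of_forall_pos_le_add fun ε hε _ => ?_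
  have hε' : (0 : ℝ) < ε := hε
  -- `b` must be positive, and `A` may vanish.
  set b : ℝ := A.toReal + ε / 3 with hbdef
  have hb : 0 < b := by positivity
  have hAb : A ≤ ENNReal.ofReal b := by
    rw [← ENNReal.ofReal_toReal htop]
    exact ENNReal.ofReal_le_ofReal (by linarith)
  have hlen := It.len_pos
  have hreal : It.len ^ (-(1 : ℝ) / 2) * (∑ P ∈ T, c P ^ 2) ^ ((1 : ℝ) / 2) ≤ 3 * b := by
    have h1 : (∑ P ∈ T, c P ^ 2) ^ ((1 : ℝ) / 2) ≤ It.len ^ ((1 : ℝ) / 2) * (3 * b) := by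
      rw [← Real.sqrt_eq_rpow, ← Real.sqrt_eq_rpow]
      refine Real.sqrt_le_iff.2 ⟨by positivity, ?_⟩
      rw [mul_pow, Real.sq_sqrt hlen.le]
      refine (key b hb hAb).trans (mul_le_mul_of_nonneg_left ?_ hlen.le)
      nlinarith [sq_nonneg b]
    calc It.len ^ (-(1 : ℝ) / 2) * (∑ P ∈ T, c P ^ 2) ^ ((1 : ℝ) / 2)
        ≤ It.len ^ (-(1 : ℝ) / 2) * (It.len ^ ((1 : ℝ) / 2) * (3 * b)) :=
          mul_le_mul_of_nonneg_left h1 (by positivity)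
      _ = 3 * b := by
          rw [← mul_assoc, ← Real.rpow_add hlen]
          norm_num
  calc (ENNReal.ofReal It.len) ^ (-(1 : ℝ) / 2) *
        ENNReal.ofReal (∑ P ∈ T, c P ^ 2) ^ ((1 : ℝ) / 2)
      = ENNReal.ofReal (It.len ^ (-(1 : ℝ) / 2) * (∑ P ∈ T, c P ^ 2) ^ ((1 : ℝ) / 2)) := by
        rw [ENNReal.ofReal_mul (by positivity), ENNReal.ofReal_rpow_of_pos hlen,
          ENNReal.ofReal_rpow_of_nonneg (Finset.sum_nonneg fun P _ => ha P) (by norm_num)]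
    _ ≤ ENNReal.ofReal (3 * b) := ENNReal.ofReal_le_ofReal hreal
    _ = 3 * A + ε := by
        rw [hbdef, mul_add, mul_div_cancel₀ _ (by norm_num : (3 : ℝ) ≠ 0),
          ENNReal.ofReal_add (by positivity) hε'.le, ENNReal.ofReal_mul (by norm_num),
          ENNReal.ofReal_toReal htop, ENNReal.ofReal_coe_nnreal]
        norm_num
end
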